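/- Let A₁ ⊆ B(H₁) and A₂ ⊆ B(H₂) be C*-algebras of operators. For x in the algebraic tensor product A₁ ⊗ A₂, define ‖x‖ as the operator norm of the induced operator on the Hilbert space tensor product H₁ ⊗ H₂. Then this defines a submultiplicative norm on A₁ ⊗ A₂ satisfying the C*-identity ‖x* x‖ = ‖x‖², and on elementary tensors ‖a ⊗ b‖ = ‖a‖ ‖b‖. -/

import Mathlib

open scoped InnerProductSpace
open TensorProduct

/-- A family of linear functionals separating the points of `M` has slice maps separating the points
of `M ⊗ N`. -/
theorem TensorProduct.eq_zero_of_forall_slice_eq_zero {𝕜 M N ι : Type*} [Field 𝕜]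
    [AddCommGroup M] [Module 𝕜 M] [AddCommGroup N] [Module 𝕜 N] (φ : ι → M →ₗ[𝕜] 𝕜)
    (hφ : ∀ m, (∀ i, φ i m = 0) → m = 0) (x : M ⊗[𝕜] N)
    (hx : ∀ i, TensorProduct.lid 𝕜 N ((φ i).rTensor N x) = 0) : x = 0 := by
  classical
  let B := Module.Basis.ofVectorSpace 𝕜 N
  have key (i : ι) (k) (y : M ⊗[𝕜] N) :
      φ i (TensorProduct.equivFinsuppOfBasisRight B y k) =
        B.repr (TensorProduct.lid 𝕜 N ((φ i).rTensor N y)) k := by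
    induction y with
    | zero => simp
    | tmul m n => simp [mul_comm]
    | add y z hy hz => simp_all
  refine (TensorProduct.equivFinsuppOfBasisRight B).injective ?_
  rw [map_zero]
  ext k : 1
  exact hφ _ fun i => by simp [key, hx]

/-- If `‖f x‖ * ‖g y‖ ≤ C * ‖x‖ * ‖y‖` for all `x` and `y`, then `‖f‖ * ‖g‖ ≤ C`. -/
theorem ContinuousLinearMap.opNorm_mul_opNorm_le {E F G H : Type*}
    [NormedAddCommGroup E] [NormedSpace ℂ E] [NormedAddCommGroup F] [NormedSpace ℂ F]
    [NormedAddCommGroup G] [NormedSpace ℂ G] [NormedAddCommGroup H] [NormedSpace ℂ H]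
    (f : E →L[ℂ] F) (g : G →L[ℂ] H) {C : ℝ} (hC : 0 ≤ C)
    (h : ∀ x y, ‖f x‖ * ‖g y‖ ≤ C * ‖x‖ * ‖y‖) : ‖f‖ * ‖g‖ ≤ C := by
  have h₁ (y : G) : ‖f‖ * ‖g y‖ ≤ C * ‖y‖ := by
    have := ((‖g y‖ : ℂ) • f).opNorm_le_bound (M := C * ‖y‖) (by positivity) fun x => by
      simpa [norm_smul, mul_assoc, mul_comm, mul_left_comm] using h x y
    simpa [norm_smul, mul_comm] using this
  have := ((‖f‖ : ℂ) • g).opNorm_le_bound hC fun y => by simpa [norm_smul] using h₁ y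
  simpa [norm_smul] using this

section HilbertTensor

variable {H₁ H₂ E : Type*}
  [NormedAddCommGroup H₁] [InnerProductSpace ℂ H₁]
  [NormedAddCommGroup H₂] [InnerProductSpace ℂ H₂]
  [NormedAddCommGroup E] [InnerProductSpace ℂ E]

/-- The isometry of the algebraic tensor product induced by a bilinear map which multiplies inner
products. -/
noncomputable def TensorProduct.liftIsometry (t : H₁ →ₗ[ℂ] H₂ →ₗ[ℂ] E)
    (ht : ∀ (ξ ξ' : H₁) (η η' : H₂), ⟪t ξ η, t ξ' η'⟫_ℂ = ⟪ξ, ξ'⟫_ℂ * ⟪η, η'⟫_ℂ) :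
    H₁ ⊗[ℂ] H₂ →ₗᵢ[ℂ] E :=
  (TensorProduct.lift t).isometryOfInner fun x y => by
    induction x with
    | zero => simp
    | add x x' hx hx' => simp only [map_add, inner_add_left, hx, hx']
    | tmul ξ η =>
      induction y with
      | zero => simp
      | add y y' hy hy' => simp only [map_add, inner_add_right, hy, hy']
      | tmul ξ' η' => simp [ht]

@[simp]
theorem TensorProduct.liftIsometry_tmul (t : H₁ →ₗ[ℂ] H₂ →ₗ[ℂ] E)
    (ht : ∀ (ξ ξ' : H₁) (η η' : H₂), ⟪t ξ η, t ξ' η'⟫_ℂ = ⟪ξ, ξ'⟫_ℂ * ⟪η, η'⟫_ℂ)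
    (ξ : H₁) (η : H₂) : TensorProduct.liftIsometry t ht (ξ ⊗ₜ η) = t ξ η := by
  simp [TensorProduct.liftIsometry]

theorem TensorProduct.denseRange_liftIsometry (t : H₁ →ₗ[ℂ] H₂ →ₗ[ℂ] E)
    (ht : ∀ (ξ ξ' : H₁) (η η' : H₂), ⟪t ξ η, t ξ' η'⟫_ℂ = ⟪ξ, ξ'⟫_ℂ * ⟪η, η'⟫_ℂ)
    (hd : Dense (↑(Submodule.span ℂ {x : E | ∃ ξ η, x = t ξ η}) : Set E)) :
    DenseRange (TensorProduct.liftIsometry t ht) := by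
  have hle : Submodule.span ℂ {x : E | ∃ ξ η, x = t ξ η} ≤
      LinearMap.range (TensorProduct.liftIsometry t ht).toLinearMap := by
    rw [Submodule.span_le]
    rintro _ ⟨ξ, η, rfl⟩
    exact ⟨ξ ⊗ₜ η, by simp⟩
  exact hd.mono fun x hx => hle hx

/-- An operator acting as `a ⊗ b` on elementary tensors has norm `‖a‖ * ‖b‖`. -/
theorem ContinuousLinearMap.norm_eq_mul_of_apply_tmul (t : H₁ →ₗ[ℂ] H₂ →ₗ[ℂ] E)
    (ht : ∀ (ξ ξ' : H₁) (η η' : H₂), ⟪t ξ η, t ξ' η'⟫_ℂ = ⟪ξ, ξ'⟫_ℂ * ⟪η, η'⟫_ℂ)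
    (hd : Dense (↑(Submodule.span ℂ {x : E | ∃ ξ η, x = t ξ η}) : Set E))
    (a : H₁ →L[ℂ] H₁) (b : H₂ →L[ℂ] H₂) (T : E →L[ℂ] E)
    (hT : ∀ ξ η, T (t ξ η) = t (a ξ) (b η)) : ‖T‖ = ‖a‖ * ‖b‖ := by
  have hnorm (ξ : H₁) (η : H₂) : ‖t ξ η‖ = ‖ξ‖ * ‖η‖ := by
    rw [← TensorProduct.liftIsometry_tmul t ht, LinearIsometry.norm_map, TensorProduct.norm_tmul]
  have hU (z : H₁ ⊗[ℂ] H₂) : T (TensorProduct.liftIsometry t ht z) =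
      TensorProduct.liftIsometry t ht (TensorProduct.mapL a b z) := by
    induction z with
    | zero => simp
    | tmul ξ η => simp [hT]
    | add y z hy hz => simp only [map_add, hy, hz]
  refine le_antisymm (T.opNorm_le_bound (by positivity) ?_) ?_
  · refine isClosed_property (TensorProduct.denseRange_liftIsometry t ht hd)
      (isClosed_le (by fun_prop) (by fun_prop)) fun z => ?_
    rw [hU, LinearIsometry.norm_map, LinearIsometry.norm_map]
    exact (TensorProduct.mapL a b).le_of_opNorm_le (TensorProduct.norm_mapL_le a b) z
  · refine a.opNorm_mul_opNorm_le b (norm_nonneg T) fun ξ η => ?_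
    rw [← hnorm, ← hT, mul_assoc, ← hnorm]
    exact T.le_opNorm _

end HilbertTensor

/-- The minimal (spatial) tensor norm: `E` plays the role of the Hilbert space
tensor product `H₁ ⊗ H₂` (with `tmul` the elementary-tensor map), `A₁ ⊆ B(H₁)`,
`A₂ ⊆ B(H₂)` are C*-algebras of operators, `Ψ` is the induced linear map of the
algebraic tensor product into `B(E)` and `st` is the tensor-product involution.
The pullback `x ↦ ‖Ψ x‖` is a norm (i.e. `Ψ` is injective), it is
submultiplicative, satisfies the C*-identity, and is a cross norm. -/
theorem stmt_17 {H₁ H₂ E : Type*}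
    [NormedAddCommGroup H₁] [InnerProductSpace ℂ H₁] [CompleteSpace H₁]
    [NormedAddCommGroup H₂] [InnerProductSpace ℂ H₂] [CompleteSpace H₂]
    [NormedAddCommGroup E] [InnerProductSpace ℂ E] [CompleteSpace E]
    (tmul : H₁ →ₗ[ℂ] H₂ →ₗ[ℂ] E)
    (hinner : ∀ (ξ ξ' : H₁) (η η' : H₂),
      ⟪tmul ξ η, tmul ξ' η'⟫_ℂ = ⟪ξ, ξ'⟫_ℂ * ⟪η, η'⟫_ℂ)
    (hdense : Dense (↑(Submodule.span ℂ {x : E | ∃ ξ η, x = tmul ξ η}) : Set E))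
    (A₁ : StarSubalgebra ℂ (H₁ →L[ℂ] H₁)) (hA₁ : IsClosed (A₁ : Set (H₁ →L[ℂ] H₁)))
    (A₂ : StarSubalgebra ℂ (H₂ →L[ℂ] H₂)) (hA₂ : IsClosed (A₂ : Set (H₂ →L[ℂ] H₂)))
    (Ψ : A₁ ⊗[ℂ] A₂ →ₗ[ℂ] (E →L[ℂ] E))
    (hΨ : ∀ (a : A₁) (b : A₂) (ξ : H₁) (η : H₂),
      Ψ (a ⊗ₜ b) (tmul ξ η) = tmul ((a : H₁ →L[ℂ] H₁) ξ) ((b : H₂ →L[ℂ] H₂) η))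
    (st : A₁ ⊗[ℂ] A₂ →+ A₁ ⊗[ℂ] A₂)
    (hst : ∀ (a : A₁) (b : A₂), st (a ⊗ₜ b) = (star a) ⊗ₜ (star b)) :
    Function.Injective Ψ ∧
    (∀ x y : A₁ ⊗[ℂ] A₂, ‖Ψ (x * y)‖ ≤ ‖Ψ x‖ * ‖Ψ y‖) ∧
    (∀ x : A₁ ⊗[ℂ] A₂, ‖Ψ (st x * x)‖ = ‖Ψ x‖ ^ 2) ∧
    (∀ (a : A₁) (b : A₂),
      ‖Ψ (a ⊗ₜ b)‖ = ‖(a : H₁ →L[ℂ] H₁)‖ * ‖(b : H₂ →L[ℂ] H₂)‖) := by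
  have hext {S T : E →L[ℂ] E} (h : ∀ ξ η, S (tmul ξ η) = T (tmul ξ η)) : S = T :=
    ContinuousLinearMap.ext_on hdense (by rintro _ ⟨ξ, η, rfl⟩; exact h ξ η)
  have hmul (x y : A₁ ⊗[ℂ] A₂) : Ψ (x * y) = Ψ x * Ψ y := by
    induction x with
    | zero => simp
    | add x x' hx hx' => simp only [add_mul, map_add, hx, hx']
    | tmul a b =>
      induction y with
      | zero => simp
      | add y y' hy hy' => simp only [mul_add, map_add, hy, hy']
      | tmul a' b' => exact hext fun ξ η => by simp [hΨ]
  have hstar (x : A₁ ⊗[ℂ] A₂) : Ψ (st x) = star (Ψ x) := by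
    induction x with
    | zero => simp
    | add x y hx hy => simp only [map_add, star_add, hx, hy]
    | tmul a b =>
      refine hext fun ξ η => hdense.eq_of_inner_left (𝕜 := ℂ) fun v hv => ?_
      induction hv using Submodule.span_induction with
      | mem v hv =>
        obtain ⟨ξ', η', rfl⟩ := hv
        simp [hst, hΨ, hinner, ContinuousLinearMap.star_eq_adjoint,
          ContinuousLinearMap.adjoint_inner_left]
      | zero => simp
      | add u v _ _ hu hv => simp only [inner_add_right, hu, hv]
      | smul c v _ hv => simp only [inner_smul_right, hv]
  refine ⟨?_, fun x y => ?_, fun x => ?_, fun a b => ?_⟩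
  · rw [injective_iff_map_eq_zero]
    intro x hx
    let φ (p : H₁ × H₁) : A₁ →ₗ[ℂ] ℂ :=
      (innerSL ℂ p.1).toLinearMap ∘ₗ (ContinuousLinearMap.apply ℂ H₁ p.2).toLinearMap ∘ₗ
        A₁.toSubalgebra.val.toLinearMap
    have hφ (p : H₁ × H₁) (a : A₁) : φ p a = ⟪p.1, (a : H₁ →L[ℂ] H₁) p.2⟫_ℂ := rfl
    have hslice (p : H₁ × H₁) (η' η : H₂) (y : A₁ ⊗[ℂ] A₂) :
        ⟪η', (TensorProduct.lid ℂ A₂ ((φ p).rTensor A₂ y) : H₂ →L[ℂ] H₂) η⟫_ℂ =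
          ⟪tmul p.1 η', Ψ y (tmul p.2 η)⟫_ℂ := by
      induction y with
      | zero => simp
      | add y z hy hz => simp [hy, hz]
      | tmul a b => simp [hΨ, hinner, hφ]
    refine TensorProduct.eq_zero_of_forall_slice_eq_zero φ (fun a ha => ?_) x fun p => ?_
    · ext ξ
      exact ext_inner_left ℂ fun ξ' => by simpa [hφ] using ha (ξ', ξ)
    · ext η
      exact ext_inner_left ℂ fun η' => by simp [hslice, hx]
  · rw [hmul]
    exact norm_mul_le _ _
  · rw [hmul, hstar, CStarRing.norm_star_mul_self, sq]
  · exact ContinuousLinearMap.norm_eq_mul_of_apply_tmul tmul hinner hdense _ _ _ (hΨ a b)
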